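/- There exists a widely digitally delicate prime in base 4; that is, there exists a prime p such that for every natural number i and every digit d ∈ {0, 1, ..., 3} with d ≠ digit_i(p), where digit_i(p) denotes the i-th base-4 digit of p (counting from the least significant digit, i = 0, with digit_i(p) = 0 for all i at or beyond the number of base-4 digits of p, i.e., leading zeros), the number p + (d − digit_i(p))·4^i obtained by replacing the i-th base-4 digit of p (including leading zeros) with d is not prime. -/

import Mathlib

/-- The i-th base-4 digit (from the least significant, starting at i = 0) of n;
for i at or beyond the number of base-4 digits of n this is 0 (a leading zero). -/
def digit (n i : ℕ) : ℕ := n / 4 ^ i % 4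

/-!
Changing one base-`b` digit of `p` turns it into `p + c * b ^ i` with `0 < |c| < b`. If `q` divides
`b ^ L - 1`, then `q` divides `p + c * b ^ i` for all `i` in a residue class modulo `L` as soon as
it does for one of them, and this depends only on `p` modulo `q`. So it suffices to find finitely
many primes `q` and a residue `a` modulo each of them such that, for every `c`, the classes of
exponents obtained in this way cover all `i`: every prime `p ≡ a` then has only changed numbers
divisible by some `q`, and Dirichlet's theorem provides infinitely many such `p`.

A changed number could still be equal to `q`. This is excluded by prescribing in addition the last
`k` digits of `p` so that they form a number larger than every `q`: changing a digit beyond the last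
`k` preserves that number, and changing one of the last `k` digits of a large `p` leaves it large.
-/

section ReplaceDigit

/-- The number obtained from `n` by replacing its `i`-th base-`b` digit `n / b ^ i % b`, possibly a
leading zero, by `d`. The subtraction never truncates. -/
def replaceDigit (b n i d : ℕ) : ℕ := n - n / b ^ i % b * b ^ i + d * b ^ i

variable {b n k i d : ℕ}

lemma replaceDigit_add (b n i d : ℕ) :
    replaceDigit b n i d + n / b ^ i % b * b ^ i = n + d * b ^ i := by
  have digit_le : n / b ^ i % b * b ^ i ≤ n :=
    (Nat.mul_le_mul_right _ (Nat.mod_le _ _)).trans (Nat.div_mul_le_self _ _)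
  rw [replaceDigit]
  lia

lemma intCast_replaceDigit (b n i d : ℕ) :
    (replaceDigit b n i d : ℤ) = n + ((d : ℤ) - (n / b ^ i % b : ℕ)) * (b : ℤ) ^ i := by
  have h := congrArg (Nat.cast : ℕ → ℤ) (replaceDigit_add b n i d)
  simp only [Nat.cast_add, Nat.cast_mul, Nat.cast_pow] at h
  linear_combination h

lemma replaceDigit_modEq_of_le (h : k ≤ i) : replaceDigit b n i d ≡ n [MOD b ^ k] := by
  have vanish (x : ℕ) : x * b ^ i ≡ 0 [MOD b ^ k] :=
    Nat.modEq_zero_iff_dvd.mpr ((pow_dvd_pow b h).mul_left x)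
  exact Nat.ModEq.add_right_cancel ((vanish _).trans (vanish d).symm)
    (congrArg (· % b ^ k) (replaceDigit_add b n i d))

lemma le_replaceDigit_add_pow_succ (hb : 0 < b) (n i d : ℕ) :
    n ≤ replaceDigit b n i d + b ^ (i + 1) := by
  have digit_le : n / b ^ i % b * b ^ i ≤ b ^ (i + 1) := by
    rw [pow_succ']
    exact Nat.mul_le_mul_right _ (Nat.mod_lt _ hb).le
  have := replaceDigit_add b n i d
  lia

lemma mod_pow_le_replaceDigit (hb : 0 < b) (hn : 2 * b ^ k ≤ n) :
    n % b ^ k ≤ replaceDigit b n i d := by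
  obtain hki | hik := le_or_gt k i
  · rw [← replaceDigit_modEq_of_le hki]
    exact Nat.mod_le _ _
  · have := le_replaceDigit_add_pow_succ hb n i d
    have : b ^ (i + 1) ≤ b ^ k := Nat.pow_le_pow_right hb hik
    have : n % b ^ k < b ^ k := Nat.mod_lt _ (pow_pos hb k)
    lia

end ReplaceDigit

/-- `p` is a widely digitally delicate prime in base `b`: a prime such that changing any one of its
base-`b` digits, leading zeros included, produces a number that is not prime. -/
def IsWidelyDigitallyDelicate (b p : ℕ) : Prop :=
  p.Prime ∧ ∀ i d : ℕ, d < b → d ≠ p / b ^ i % b → ¬ (replaceDigit b p i d).Prime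

/-- `Q` is a covering set for the digit changes of `a` in base `b`: every number that differs from
`a` by a nonzero term `c * b ^ i` with `|c| < b` has a divisor in `Q`. Only the residue of `a`
modulo the members of `Q` matters. -/
def IsDigitCover (b : ℕ) (Q : Finset ℕ) (a : ℤ) : Prop :=
  ∀ c : ℤ, c ≠ 0 → c.natAbs < b → ∀ i : ℕ, ∃ q ∈ Q, (q : ℤ) ∣ a + c * (b : ℤ) ^ i

namespace IsDigitCover

variable {b : ℕ} {Q : Finset ℕ}

lemma of_modEq {a₁ a₂ : ℤ} (h : IsDigitCover b Q a₁) (ha : ∀ q ∈ Q, a₁ ≡ a₂ [ZMOD q]) :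
    IsDigitCover b Q a₂ := by
  intro c hc hcb i
  obtain ⟨q, hqQ, hq⟩ := h c hc hcb i
  exact ⟨q, hqQ, ((ha q hqQ).add_right _).dvd_iff.mp hq⟩

lemma of_forall_lt_period {a : ℤ} {L : ℕ} (hL : 0 < L) (period : ∀ q ∈ Q, b ^ L ≡ 1 [MOD q])
    (h : ∀ c : ℤ, c ≠ 0 → c.natAbs < b → ∀ i < L, ∃ q ∈ Q, (q : ℤ) ∣ a + c * (b : ℤ) ^ i) :
    IsDigitCover b Q a := by
  intro c hc hcb i
  obtain ⟨q, hqQ, hq⟩ := h c hc hcb (i % L) (Nat.mod_lt i hL)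
  have pow_period : (b : ZMod q) ^ L = 1 := by
    exact_mod_cast (ZMod.natCast_eq_natCast_iff _ _ q).mpr (period q hqQ)
  refine ⟨q, hqQ, ?_⟩
  rw [← ZMod.intCast_zmod_eq_zero_iff_dvd] at hq ⊢
  push_cast at hq ⊢
  rwa [pow_eq_pow_mod i pow_period]

lemma exists_dvd_replaceDigit {n i d : ℕ} (h : IsDigitCover b Q n) (hd : d < b)
    (hne : d ≠ n / b ^ i % b) : ∃ q ∈ Q, q ∣ replaceDigit b n i d := by
  have hdigit : n / b ^ i % b < b := Nat.mod_lt _ (by lia)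
  obtain ⟨q, hqQ, hq⟩ := h ((d : ℤ) - (n / b ^ i % b : ℕ)) (by lia) (by lia) i
  rw [← intCast_replaceDigit] at hq
  exact ⟨q, hqQ, Int.natCast_dvd_natCast.mp hq⟩

lemma isWidelyDigitallyDelicate {p k : ℕ} (h : IsDigitCover b Q p) (hp : p.Prime)
    (hpk : 2 * b ^ k ≤ p) (hQ : ∀ q ∈ Q, q ≠ 1 ∧ q < p % b ^ k) :
    IsWidelyDigitallyDelicate b p := by
  refine ⟨hp, fun i d hd hne hprime ↦ ?_⟩
  obtain ⟨q, hqQ, hq⟩ := h.exists_dvd_replaceDigit hd hne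
  obtain ⟨q_ne_one, q_lt⟩ := hQ q hqQ
  have q_eq : q = replaceDigit b p i d := ((hprime.dvd_iff_eq q_ne_one).mp hq).symm
  have := mod_pow_le_replaceDigit (i := i) (d := d) (Nat.zero_lt_of_lt hd) hpk
  lia

theorem infinite_setOf_isWidelyDigitallyDelicate {a m k : ℕ} (h : IsDigitCover b Q a) (hm : m ≠ 0)
    (ham : a.Coprime m) (hbm : b ^ k ∣ m) (hQm : ∀ q ∈ Q, q ∣ m)
    (hQ : ∀ q ∈ Q, q ≠ 1 ∧ q < a % b ^ k) : {p | IsWidelyDigitallyDelicate b p}.Infinite := by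
  refine Set.infinite_of_forall_exists_gt fun N ↦ ?_
  obtain ⟨p, hpN, hp, hpa⟩ := Nat.forall_exists_prime_gt_and_modEq (max N (2 * b ^ k)) hm ham
  obtain ⟨hN, hk⟩ := max_lt_iff.mp hpN
  have cover : IsDigitCover b Q p :=
    h.of_modEq fun q hq ↦ Int.natCast_modEq_iff.mpr (hpa.of_dvd (hQm q hq)).symm
  have last_digits : p % b ^ k = a % b ^ k := hpa.of_dvd hbm
  exact ⟨p, cover.isWidelyDigitallyDelicate hp hk.le (last_digits ▸ hQ), hN⟩

end IsDigitCover

section BaseFour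

/-- A set of primes for which digit changes in base 4 can be covered; each of them divides
`4 ^ 720 - 1`. -/
def coverPrimes : Finset ℕ :=
  {3, 5, 7, 11, 13, 17, 19, 31, 37, 41, 61, 73, 97, 109, 151, 181, 193, 241, 257, 331, 433, 577,
    631, 673, 1153, 1321, 6337, 38737, 65537}

/-- A number whose digit changes in base 4 are covered by `coverPrimes`. Its residues modulo these
primes were found by a computer search (the residue `1` modulo `3` alone covers the changes by
`-4 ^ i` and `2 * 4 ^ i`). The Chinese remainder theorem combines them with the residue `-1` modulo
`4 ^ 9`, which makes the last nine digits form a number larger than every prime of the cover. -/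
def coverResidue : ℕ :=
  736830534652826456960778644981722916602232835627046765239398717456383

lemma four_pow_modEq_one_of_mem_coverPrimes : ∀ q ∈ coverPrimes, 4 ^ 720 ≡ 1 [MOD q] := by
  decide +kernel

-- Stated in `ℕ`, where the kernel evaluates powers and remainders of large numbers natively.
lemma exists_mem_coverPrimes_dvd_add_and_modEq : ∀ c < 4, 0 < c → ∀ i < 720,
    (∃ q ∈ coverPrimes, q ∣ coverResidue + c * 4 ^ i) ∧
      ∃ q ∈ coverPrimes, c * 4 ^ i ≡ coverResidue [MOD q] := by
  decide +kernel

lemma isDigitCover_coverPrimes_coverResidue : IsDigitCover 4 coverPrimes coverResidue := by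
  refine .of_forall_lt_period (L := 720) (by simp) four_pow_modEq_one_of_mem_coverPrimes
    fun c hc hc4 i hi ↦ ?_
  obtain ⟨⟨q, hqQ, raise⟩, ⟨r, hrQ, lower⟩⟩ :=
    exists_mem_coverPrimes_dvd_add_and_modEq c.natAbs hc4 (Int.natAbs_pos.mpr hc) i hi
  obtain hpos | hneg := le_total 0 c
  · lift c to ℕ using hpos
    exact ⟨q, hqQ, by exact_mod_cast raise⟩
  · exact ⟨r, hrQ, by simpa [abs_of_nonpos hneg] using Nat.modEq_iff_dvd.mp lower⟩

lemma coprime_coverResidue : coverResidue.Coprime (4 ^ 9 * ∏ q ∈ coverPrimes, q) := by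
  decide +kernel

lemma ne_one_and_lt_coverResidue_mod_of_mem_coverPrimes :
    ∀ q ∈ coverPrimes, q ≠ 1 ∧ q < coverResidue % 4 ^ 9 := by
  decide

end BaseFour

theorem exists_widely_digitally_delicate_base_4_general :
    {p | IsWidelyDigitallyDelicate 4 p}.Infinite :=
  isDigitCover_coverPrimes_coverResidue.infinite_setOf_isWidelyDigitallyDelicate
    (m := 4 ^ 9 * ∏ q ∈ coverPrimes, q) (by decide) coprime_coverResidue
    (Nat.dvd_mul_right _ _) (fun _ hq ↦ (Finset.dvd_prod_of_mem _ hq).mul_left _)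
    ne_one_and_lt_coverResidue_mod_of_mem_coverPrimes

/-- There exists a widely digitally delicate prime in base 4: a prime p such
that replacing any one of its base-4 digits, including any of its leading
zeros, by a different digit in {0, ..., 3} yields a number that is not prime. -/
theorem exists_widely_digitally_delicate_base_4 :
    ∃ p : ℕ, Nat.Prime p ∧
      ∀ i : ℕ, ∀ d : ℕ, d ≤ 3 → d ≠ digit p i →
        ¬ Nat.Prime (p - digit p i * 4 ^ i + d * 4 ^ i) := by
  obtain ⟨p, hp, delicate⟩ := exists_widely_digitally_delicate_base_4_general.nonempty
  exact ⟨p, hp, fun i d hd ↦ delicate i d (Nat.lt_succ_of_le hd)⟩
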